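/- Let s ≥ 32, let (a_{ij}) ∈ ℤ^{3×s} be propitious, and let δ ∈ (0,1) be such that the system Σ_{j=1}^s a_{ij}x_j⁴ = 0 (1 ≤ i ≤ 3) has a non-singular real solution θ ∈ (δ,1)^s. Then there are constants C > 0, c > 0 and P₀ such that for every P ≥ P₀: (i) the limit 𝔍 = lim_{X→∞} 𝔍(X) exists; (ii) |𝔍 − 𝔍(X)| ≤ C·P^{s−12}·X^{−1} for all X ≥ 1; and (iii) Re(𝔍) ≥ c·P^{s−12}. -/

import Mathlib

open MeasureTheory Filter
open scoped Classical

/-- `e(α) = exp(2πiα)`. -/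
noncomputable def eC (α : ℝ) : ℂ := Complex.exp (2 * Real.pi * Complex.I * α)

/-- A `3 × m` integer matrix is highly non-singular if `m ≥ 3` and every three of its
columns are linearly independent. -/
def HighlyNonSingular {m : ℕ} (A : Matrix (Fin 3) (Fin m) ℤ) : Prop :=
  3 ≤ m ∧ ∀ j₁ j₂ j₃ : Fin m, j₁ ≠ j₂ → j₁ ≠ j₃ → j₂ ≠ j₃ →
    LinearIndependent ℚ
      ![(fun i => (A i j₁ : ℚ)), (fun i => (A i j₂ : ℚ)), (fun i => (A i j₃ : ℚ))]

/-- A `3 × s` integer matrix is propitious if `s ≥ 32` and it has block structure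
`(A₀, …, A₇, B)` in which each `Aₗ ∈ ℤ^{3×4}` is highly non-singular. -/
def Propitious {s : ℕ} (A : Matrix (Fin 3) (Fin s) ℤ) : Prop :=
  ∃ _h : 32 ≤ s, ∀ l : Fin 8,
    HighlyNonSingular (Matrix.of fun i (k : Fin 4) =>
      A i ⟨4 * l.val + k.val, by have h1 := l.isLt; have h2 := k.isLt; omega⟩)

/-- `x` is a non-singular real solution of the system `∑ⱼ aᵢⱼ xⱼ⁴ = 0 (1 ≤ i ≤ 3)` if it
solves the system and the Jacobian matrix `(aᵢⱼ xⱼ³)` has rank `3`. -/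
def NonsingularSol {s : ℕ} (A : Matrix (Fin 3) (Fin s) ℤ) {K : Type*} [Field K]
    (x : Fin s → K) : Prop :=
  (∀ i, ∑ j, (A i j : K) * x j ^ 4 = 0) ∧
    (Matrix.of fun i j => (A i j : K) * x j ^ 3).rank = 3

/-- The ternary linear forms `Λ_j(γ) = ∑_{i=1}^3 a_{ij} γ_i`. -/
noncomputable def LamR {s : ℕ} (A : Matrix (Fin 3) (Fin s) ℤ) (γ : Fin 3 → ℝ)
    (j : Fin s) : ℝ :=
  ∑ i, (A i j : ℝ) * γ i

/-- `v(θ) = ∫_{δP}^P e(θγ⁴) dγ`. -/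
noncomputable def vBW (δ P θ : ℝ) : ℂ := ∫ γ in δ * P..P, eC (θ * γ ^ 4)

/-- The truncated singular integral
`𝔍(X) = ∫_{[−XP⁻⁴, XP⁻⁴]³} ∏_{j=1}^s v(Λ_j(γ)) dγ`. -/
noncomputable def JBW {s : ℕ} (A : Matrix (Fin 3) (Fin s) ℤ) (δ P X : ℝ) : ℂ :=
  ∫ γ in Set.Icc (fun _ : Fin 3 => -(X / P ^ 4)) (fun _ : Fin 3 => X / P ^ 4),
    ∏ j, vBW δ P (LamR A γ j)

lemma eC_eq (x : ℝ) : eC x = Complex.exp ((2 * Real.pi * x : ℝ) * Complex.I) := by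
  unfold eC; congr 1; push_cast; ring

lemma norm_eC (x : ℝ) : ‖eC x‖ = 1 := by
  rw [eC_eq]; exact Complex.norm_exp_ofReal_mul_I _

lemma continuous_eC : Continuous eC := by
  unfold eC; fun_prop

lemma eC_add (x y : ℝ) : eC (x + y) = eC x * eC y := by
  unfold eC; rw [← Complex.exp_add]; congr 1; push_cast; ring

lemma eC_sum {ι : Type*} (t : Finset ι) (x : ι → ℝ) :
    eC (∑ j ∈ t, x j) = ∏ j ∈ t, eC (x j) := by
  unfold eC; rw [← Complex.exp_sum]; congr 1; push_cast; rw [Finset.mul_sum]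

/-- scaling of `v`. -/
lemma vBW_scale (δ P θ : ℝ) (hP : 0 < P) : vBW δ P θ = P * vBW δ 1 (P ^ 4 * θ) := by
  unfold vBW
  have h := intervalIntegral.integral_comp_mul_left (a := δ) (b := 1)
    (fun γ : ℝ => eC (θ * γ ^ 4)) hP.ne'
  have h2 : (∫ γ in δ * 1..1, eC (P ^ 4 * θ * γ ^ 4)) = ∫ γ in δ..1, eC (θ * (P * γ) ^ 4) := by
    rw [mul_one]; congr 1; ext γ; congr 1; ring
  rw [h2, h, mul_one, mul_comm δ P]
  rw [Complex.real_smul, ← mul_assoc, ← Complex.ofReal_mul, mul_inv_cancel₀ hP.ne']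
  simp

lemma continuous_vBW (δ : ℝ) : Continuous (vBW δ 1) := by
  unfold vBW
  apply intervalIntegral.continuous_parametric_intervalIntegral_of_continuous'
  have := continuous_eC
  fun_prop

/-- density of `t ^ 4`. -/
noncomputable def rhoW (u : ℝ) : ℝ := u ^ (-(3/4) : ℝ) / 4

lemma rhoW_nonneg {u : ℝ} (hu : 0 ≤ u) : 0 ≤ rhoW u := by unfold rhoW; positivity

lemma rhoW_lower {u : ℝ} (hu : 0 < u) (hu1 : u ≤ 1) : 1 / 4 ≤ rhoW u := by
  unfold rhoW
  have := Real.one_le_rpow_of_pos_of_le_one_of_nonpos hu hu1 (by norm_num : (-(3/4) : ℝ) ≤ 0)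
  linarith

lemma rhoW_hasDeriv {u : ℝ} (hu : 0 < u) :
    HasDerivAt rhoW (-(3/4) * u ^ (-(3/4) - 1 : ℝ) / 4) u := by
  unfold rhoW
  exact (Real.hasDerivAt_rpow_const (Or.inl hu.ne')).div_const 4

lemma rhoW_contOn {a : ℝ} (ha : 0 < a) : ContinuousOn rhoW (Set.Icc a 1) := fun u hu =>
  (rhoW_hasDeriv (lt_of_lt_of_le ha hu.1)).continuousAt.continuousWithinAt

lemma vBW_eq (δ β : ℝ) (hδ : δ ∈ Set.Ioo (0 : ℝ) 1) :
    vBW δ 1 β = ∫ u in δ ^ 4..1, (rhoW u : ℂ) * eC (β * u) := by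
  unfold vBW
  obtain ⟨h0, h1⟩ := hδ
  have key := intervalIntegral.integral_comp_smul_deriv'' (a := δ) (b := 1)
    (f := fun t : ℝ => t ^ 4) (f' := fun t : ℝ => 4 * t ^ 3)
    (g := fun u : ℝ => (rhoW u : ℂ) * eC (β * u)) (by fun_prop)
    (fun x _ => by simpa using (hasDerivAt_pow 4 x).hasDerivWithinAt) (by fun_prop) (by
      rw [Set.uIcc_of_le h1.le]
      have : ContinuousOn rhoW (Set.image (fun t : ℝ => t ^ 4) (Set.Icc δ 1)) := by
        apply (rhoW_contOn (a := δ ^ 4) (by positivity)).mono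
        rintro _ ⟨t, ht, rfl⟩
        exact ⟨pow_le_pow_left₀ h0.le ht.1 4, pow_le_one₀ (h0.le.trans ht.1) ht.2⟩
      have h2 : Continuous fun u : ℝ => eC (β * u) := continuous_eC.comp (by fun_prop)
      exact (Complex.continuous_ofReal.comp_continuousOn this).mul h2.continuousOn)
  rw [one_pow] at key
  rw [← key, mul_one]
  apply intervalIntegral.integral_congr
  intro t ht
  rw [Set.uIcc_of_le h1.le] at ht
  have ht0 : 0 < t := lt_of_lt_of_le h0 ht.1
  simp only [Function.comp, Complex.real_smul]
  rw [← mul_assoc, ← Complex.ofReal_mul]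
  have : 4 * t ^ 3 * rhoW (t ^ 4) = 1 := by
    unfold rhoW
    rw [← Real.rpow_natCast t 4, ← Real.rpow_mul ht0.le, ← Real.rpow_natCast t 3]
    have : t ^ ((3 : ℕ) : ℝ) * t ^ (((4 : ℕ) : ℝ) * (-(3/4))) = 1 := by
      rw [← Real.rpow_add ht0]; norm_num
    linarith
  rw [this]; simp

lemma vBW_decay (δ : ℝ) (hδ : δ ∈ Set.Ioo (0 : ℝ) 1) :
    ∃ C > (0 : ℝ), ∀ β : ℝ, ‖vBW δ 1 β‖ ≤ C * (1 + |β|)⁻¹ := by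
  have h0 := hδ.1
  have h1 := hδ.2
  have ha : 0 < δ ^ 4 := by positivity
  have ha1 : δ ^ 4 ≤ 1 := pow_le_one₀ h0.le h1.le
  set ρ' : ℝ → ℝ := fun u => -(3/4) * u ^ (-(3/4) - 1 : ℝ) / 4 with hρ'
  have hc' : ContinuousOn ρ' (Set.Icc (δ ^ 4) 1) := by
    apply ContinuousOn.div_const
    apply ContinuousOn.mul continuousOn_const
    exact fun u hu => (Real.continuousAt_rpow_const u _
      (Or.inl (lt_of_lt_of_le ha hu.1).ne')).continuousWithinAt
  have hi' : IntervalIntegrable (fun u => (ρ' u : ℂ)) volume (δ ^ 4) 1 := by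
    apply ContinuousOn.intervalIntegrable
    rw [Set.uIcc_of_le ha1]
    exact Complex.continuous_ofReal.comp_continuousOn hc'
  set D : ℝ := |rhoW 1| + |rhoW (δ ^ 4)| + ∫ u in δ ^ 4..1, |ρ' u| with hD
  have hDi : 0 ≤ ∫ u in δ ^ 4..1, |ρ' u| :=
    intervalIntegral.integral_nonneg ha1 (fun u _ => abs_nonneg _)
  have hD0 : 0 ≤ D := by positivity
  have bnd1 : ∀ β, ‖vBW δ 1 β‖ ≤ 1 := by
    intro β
    unfold vBW
    have := intervalIntegral.norm_integral_le_of_norm_le_const (a := δ * 1) (b := 1) (C := 1)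
      (f := fun γ : ℝ => eC (β * γ ^ 4)) (fun x _ => (norm_eC _).le)
    refine this.trans ?_
    rw [mul_one, abs_of_pos (by linarith)]; linarith
  have bnd2 : ∀ β, ‖vBW δ 1 β‖ * |β| ≤ D := by
    intro β
    rcases eq_or_ne β 0 with rfl | hβ
    · simpa using hD0
    have hk : (2 * Real.pi * Complex.I * β : ℂ) ≠ 0 := by
      have := Real.pi_ne_zero
      simp [hβ, this]
    have hE : ∀ u : ℝ, HasDerivAt (fun u : ℝ => eC (β * u) / (2 * Real.pi * Complex.I * β))
        (eC (β * u)) u := by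
      intro u
      have h1 : HasDerivAt (fun u : ℝ => (2 * Real.pi * Complex.I * β : ℂ) * (u : ℂ))
          (2 * Real.pi * Complex.I * β) u := by
        simpa using (Complex.ofRealCLM.hasDerivAt (x := u)).const_mul
          (2 * Real.pi * Complex.I * β : ℂ)
      have h2 := (h1.cexp).div_const (2 * Real.pi * Complex.I * β : ℂ)
      rw [mul_div_assoc, div_self hk, mul_one] at h2
      have e : ∀ u : ℝ, eC (β * u) = Complex.exp (2 * Real.pi * Complex.I * β * u) := by
        intro u; unfold eC; congr 1; push_cast; ring
      simp only [e]
      exact h2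
    have hEc : Continuous fun u : ℝ => eC (β * u) := continuous_eC.comp (by fun_prop)
    have ibp := intervalIntegral.integral_mul_deriv_eq_deriv_mul (a := δ ^ 4) (b := 1)
      (u := fun u => (rhoW u : ℂ)) (u' := fun u => (ρ' u : ℂ))
      (v := fun u : ℝ => eC (β * u) / (2 * Real.pi * Complex.I * β))
      (v' := fun u : ℝ => eC (β * u))
      (fun x hx => by
        rw [Set.uIcc_of_le ha1] at hx
        exact (rhoW_hasDeriv (lt_of_lt_of_le ha hx.1)).ofReal_comp)
      (fun x _ => hE x) hi' (hEc.intervalIntegrable _ _)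
    rw [vBW_eq δ β hδ, ibp]
    have hn : ∀ u : ℝ, ‖eC (β * u) / (2 * Real.pi * Complex.I * β)‖ = (2 * Real.pi * |β|)⁻¹ := by
      intro u
      rw [norm_div, norm_eC]
      simp [abs_of_pos Real.pi_pos]
    set κ := (2 * Real.pi * |β|)⁻¹ with hκ
    have hβ' : 0 < |β| := abs_pos.mpr hβ
    have hκβ : κ * |β| ≤ 1 := by
      rw [hκ, mul_inv, mul_assoc, inv_mul_cancel₀ hβ'.ne', mul_one]
      apply inv_le_one_of_one_le₀
      nlinarith [Real.pi_gt_three]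
    have i1 : ‖∫ x in δ ^ 4..1, (ρ' x : ℂ) * (eC (β * x) / (2 * Real.pi * Complex.I * β))‖
        ≤ (∫ u in δ ^ 4..1, |ρ' u|) * κ := by
      refine (intervalIntegral.norm_integral_le_integral_norm ha1).trans ?_
      rw [← intervalIntegral.integral_mul_const]
      apply le_of_eq
      congr 1; ext x
      rw [norm_mul, hn, Complex.norm_real, Real.norm_eq_abs]
    have tri : ‖(rhoW 1 : ℂ) * (eC (β * 1) / (2 * Real.pi * Complex.I * β)) -
        (rhoW (δ ^ 4) : ℂ) * (eC (β * δ ^ 4) / (2 * Real.pi * Complex.I * β)) -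
        ∫ x in δ ^ 4..1, (ρ' x : ℂ) * (eC (β * x) / (2 * Real.pi * Complex.I * β))‖ ≤ D * κ := by
      refine (norm_sub_le _ _).trans ?_
      refine (add_le_add (norm_sub_le _ _) i1).trans ?_
      rw [norm_mul, norm_mul, hn, hn, Complex.norm_real, Complex.norm_real, Real.norm_eq_abs,
        Real.norm_eq_abs, hD]
      apply le_of_eq; ring
    calc _ ≤ D * κ * |β| := mul_le_mul_of_nonneg_right tri hβ'.le
      _ = D * (κ * |β|) := by ring
      _ ≤ D * 1 := by gcongr
      _ = D := mul_one D
  refine ⟨1 + D, by positivity, fun β => ?_⟩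
  rw [← div_eq_mul_inv, le_div_iff₀ (by positivity)]
  linarith [bnd1 β, bnd2 β]

lemma block_det {s : ℕ} (hs : 32 ≤ s) (A : Matrix (Fin 3) (Fin s) ℤ) (hA : Propitious A)
    (l : Fin 8) : (Matrix.of fun (k i : Fin 3) =>
      (A i ⟨4 * l.val + k.val, by have h1 := l.isLt; have h2 := k.isLt; omega⟩ : ℝ)).det ≠ 0 := by
  obtain ⟨_, h⟩ := hA
  have h2 := (h l).2 0 1 2 (by decide) (by decide) (by decide)
  set M : Matrix (Fin 3) (Fin 3) ℚ := Matrix.of fun (k i : Fin 3) =>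
      (A i ⟨4 * l.val + k.val, by have h1 := l.isLt; have h2 := k.isLt; omega⟩ : ℚ) with hM
  have h3 : LinearIndependent ℚ M.row := by
    convert h2 using 1
    ext k i
    fin_cases k <;> rfl
  rw [Matrix.linearIndependent_rows_iff_isUnit, Matrix.isUnit_iff_isUnit_det] at h3
  have h4 : (Matrix.of fun (k i : Fin 3) =>
      (A i ⟨4 * l.val + k.val, by have h1 := l.isLt; have h2 := k.isLt; omega⟩ : ℝ))
      = (Rat.castHom ℝ).mapMatrix M := by
    ext k i; simp [hM]
  rw [h4, ← RingHom.map_det]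
  simpa using h3.ne_zero

lemma block_bound {s : ℕ} (hs : 32 ≤ s) (A : Matrix (Fin 3) (Fin s) ℤ) (hA : Propitious A)
    (l : Fin 8) : ∃ K : ℝ, 0 < K ∧ ∀ γ : Fin 3 → ℝ, ∃ k : Fin 3,
      ‖γ‖ ≤ K * |LamR A γ ⟨4 * l.val + k.val, by have h1 := l.isLt; have h2 := k.isLt; omega⟩| := by
  have hd := block_det hs A hA l
  set M : Matrix (Fin 3) (Fin 3) ℝ := Matrix.of fun (k i : Fin 3) =>
      (A i ⟨4 * l.val + k.val, by have h1 := l.isLt; have h2 := k.isLt; omega⟩ : ℝ) with hM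
  have hinj : LinearMap.ker (Matrix.mulVecLin M) = ⊥ := by
    rw [LinearMap.ker_eq_bot]
    exact Matrix.mulVec_injective_of_isUnit
      ((Matrix.isUnit_iff_isUnit_det M).2 (isUnit_iff_ne_zero.2 hd))
  obtain ⟨K, hK, hanti⟩ := LinearMap.exists_antilipschitzWith _ hinj
  refine ⟨K, hK, fun γ => ?_⟩
  have h1 : ‖γ‖ ≤ K * ‖Matrix.mulVecLin M γ‖ := by
    simpa using hanti.le_mul_dist γ 0
  obtain ⟨k, hk⟩ : ∃ k, ‖Matrix.mulVecLin M γ k‖ = ‖Matrix.mulVecLin M γ‖ := by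
    by_contra! hne
    have : ‖Matrix.mulVecLin M γ‖ < ‖Matrix.mulVecLin M γ‖ := by
      rw [Pi.norm_def]
      have := (Finset.exists_mem_eq_sup (Finset.univ : Finset (Fin 3)) ⟨0, by simp⟩
        fun b => ‖Matrix.mulVecLin M γ b‖₊)
      obtain ⟨b, _, hb⟩ := this
      exact absurd (by rw [Pi.norm_def, hb]; rfl) (hne b)
    exact lt_irrefl _ this
  refine ⟨k, ?_⟩
  rw [← hk] at h1
  exact h1

/-- the rescaled integrand -/
noncomputable def fW {s : ℕ} (A : Matrix (Fin 3) (Fin s) ℤ) (δ : ℝ) (γ : Fin 3 → ℝ) : ℂ :=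
  ∏ j, vBW δ 1 (LamR A γ j)

lemma continuous_fW {s : ℕ} (A : Matrix (Fin 3) (Fin s) ℤ) (δ : ℝ) : Continuous (fW A δ) := by
  unfold fW
  refine continuous_finsetProd _ fun j _ => (continuous_vBW δ).comp ?_
  unfold LamR
  fun_prop

lemma fW_bound {s : ℕ} (hs : 32 ≤ s) (A : Matrix (Fin 3) (Fin s) ℤ) (hA : Propitious A)
    (δ : ℝ) (hδ : δ ∈ Set.Ioo (0 : ℝ) 1) :
    ∃ B > (0 : ℝ), ∀ γ, ‖fW A δ γ‖ ≤ B * ((1 + ‖γ‖)⁻¹) ^ 5 := by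
  obtain ⟨C, hC, hv⟩ := vBW_decay δ hδ
  choose K hK hbl using block_bound hs A hA
  set L : ℝ := 1 + ∑ l, K l with hL
  have hKL : ∀ l, K l ≤ L := fun l => by
    have := Finset.single_le_sum (f := K) (fun i _ => (hK i).le) (Finset.mem_univ l)
    linarith
  have hL1 : 1 ≤ L := by
    have := Finset.sum_nonneg (s := Finset.univ) (f := K) (fun i _ => (hK i).le)
    linarith
  refine ⟨C ^ s * L ^ 8, by positivity, fun γ => ?_⟩
  choose k hk using fun l => hbl l γ
  set g : Fin 8 → Fin s := fun l =>
    ⟨4 * l.val + (k l).val, by have h1 := l.isLt; have h2 := (k l).isLt; omega⟩ with hg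
  have ginj : Function.Injective g := by
    intro l l' h
    have := congrArg Fin.val h
    simp only [hg] at this
    have := (k l).isLt
    have := (k l').isLt
    ext; omega
  have h1 : ‖fW A δ γ‖ ≤ C ^ s * ∏ j, (1 + |LamR A γ j|)⁻¹ := by
    unfold fW
    rw [norm_prod]
    calc _ ≤ ∏ j : Fin s, (C * (1 + |LamR A γ j|)⁻¹) :=
          Finset.prod_le_prod (fun _ _ => norm_nonneg _) (fun j _ => hv _)
      _ = _ := by rw [Finset.prod_mul_distrib]; simp
  have h2 : ∏ j, (1 + |LamR A γ j|)⁻¹ ≤ ∏ j ∈ Finset.univ.map ⟨g, ginj⟩, (1 + |LamR A γ j|)⁻¹ := by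
    rw [← Finset.prod_mul_prod_compl (Finset.univ.map ⟨g, ginj⟩)]
    apply mul_le_of_le_one_right (Finset.prod_nonneg fun _ _ => by positivity)
    apply Finset.prod_le_one (fun _ _ => by positivity)
    intro j _
    exact inv_le_one_of_one_le₀ (by linarith [abs_nonneg (LamR A γ j)])
  have h3 : ∏ j ∈ Finset.univ.map ⟨g, ginj⟩, (1 + |LamR A γ j|)⁻¹ ≤ (L * (1 + ‖γ‖)⁻¹) ^ 8 := by
    rw [Finset.prod_map]
    simp only [Function.Embedding.coeFn_mk]
    calc _ ≤ ∏ l : Fin 8, (L * (1 + ‖γ‖)⁻¹) := by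
          apply Finset.prod_le_prod (fun _ _ => by positivity)
          intro l _
          rw [inv_le_iff_one_le_mul₀ (by positivity)]
          have e : L * (1 + ‖γ‖)⁻¹ * (1 + |LamR A γ (g l)|)
            = (L * (1 + |LamR A γ (g l)|)) / (1 + ‖γ‖) := by ring
          rw [e, le_div_iff₀ (by positivity)]
          have h5 := hk l
          have h6 := mul_le_mul_of_nonneg_right (hKL l) (abs_nonneg (LamR A γ (g l)))
          have h7 : ‖γ‖ ≤ K l * |LamR A γ (g l)| := h5
          linarith
      _ = _ := by rw [Finset.prod_const, Finset.card_univ, Fintype.card_fin]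
  have h4 : (L * (1 + ‖γ‖)⁻¹) ^ 8 ≤ L ^ 8 * ((1 + ‖γ‖)⁻¹) ^ 5 := by
    rw [mul_pow]
    apply mul_le_mul_of_nonneg_left _ (by positivity)
    apply pow_le_pow_of_le_one (by positivity) _ (by norm_num)
    exact inv_le_one_of_one_le₀ (by linarith [norm_nonneg γ])
  calc _ ≤ _ := h1
    _ ≤ C ^ s * (L ^ 8 * ((1 + ‖γ‖)⁻¹) ^ 5) := by
      apply mul_le_mul_of_nonneg_left _ (by positivity)
      exact h2.trans (h3.trans h4)
    _ = _ := by ring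

lemma integrable_bracket :
    Integrable (fun γ : Fin 3 → ℝ => ((1 + ‖γ‖)⁻¹) ^ 4) := by
  have := integrable_one_add_norm (μ := (volume : Measure (Fin 3 → ℝ))) (r := 4)
    (by simp; norm_num)
  refine this.congr (Filter.Eventually.of_forall fun γ => ?_)
  have : (0 : ℝ) ≤ 1 + ‖γ‖ := by positivity
  simp only
  rw [Real.rpow_neg this, inv_pow]
  norm_cast

lemma integrable_fW {s : ℕ} (hs : 32 ≤ s) (A : Matrix (Fin 3) (Fin s) ℤ) (hA : Propitious A)
    (δ : ℝ) (hδ : δ ∈ Set.Ioo (0 : ℝ) 1) : Integrable (fW A δ) := by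
  obtain ⟨B, hB, hb⟩ := fW_bound hs A hA δ hδ
  refine (integrable_bracket.const_mul B).mono' (continuous_fW A δ).aestronglyMeasurable
    (Filter.Eventually.of_forall fun γ => (hb γ).trans ?_)
  apply mul_le_mul_of_nonneg_left _ hB.le
  apply pow_le_pow_of_le_one (by positivity) _ (by norm_num)
  exact inv_le_one_of_one_le₀ (by linarith [norm_nonneg γ])

lemma Icc_eq_ball (X : ℝ) (hX : 0 ≤ X) :
    Set.Icc (fun _ : Fin 3 => -X) (fun _ : Fin 3 => X) = Metric.closedBall 0 X := by
  ext γ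
  rw [mem_closedBall_zero_iff, pi_norm_le_iff_of_nonneg hX]
  simp only [Set.mem_Icc, Pi.le_def, Real.norm_eq_abs, abs_le]
  exact ⟨fun h i => ⟨h.1 i, h.2 i⟩, fun h => ⟨fun i => (h i).1, fun i => (h i).2⟩⟩

lemma tail_bound {s : ℕ} (hs : 32 ≤ s) (A : Matrix (Fin 3) (Fin s) ℤ) (hA : Propitious A)
    (δ : ℝ) (hδ : δ ∈ Set.Ioo (0 : ℝ) 1) : ∃ C > (0 : ℝ), ∀ X : ℝ, 1 ≤ X →
    ‖(∫ γ, fW A δ γ) - ∫ γ in Metric.closedBall 0 X, fW A δ γ‖ ≤ C * X⁻¹ := by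
  obtain ⟨B, hB, hb⟩ := fW_bound hs A hA δ hδ
  have hI := integrable_fW hs A hA δ hδ
  have hN : 0 ≤ ∫ γ : Fin 3 → ℝ, ((1 + ‖γ‖)⁻¹) ^ 4 := integral_nonneg fun _ => by positivity
  refine ⟨B * (∫ γ : Fin 3 → ℝ, ((1 + ‖γ‖)⁻¹) ^ 4) + 1, by positivity, fun X hX => ?_⟩
  have hX0 : 0 < X := by linarith
  have hm : MeasurableSet (Metric.closedBall (0 : Fin 3 → ℝ) X) := measurableSet_closedBall
  rw [← integral_add_compl hm hI, add_sub_cancel_left]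
  have h1 : ‖∫ γ in (Metric.closedBall (0 : Fin 3 → ℝ) X)ᶜ, fW A δ γ‖ ≤
      ∫ γ in (Metric.closedBall (0 : Fin 3 → ℝ) X)ᶜ, (B * X⁻¹) * ((1 + ‖γ‖)⁻¹) ^ 4 := by
    apply norm_integral_le_of_norm_le (integrable_bracket.const_mul _).integrableOn
    filter_upwards [ae_restrict_mem hm.compl] with γ hγ
    have hγ' : X < ‖γ‖ := by simpa using hγ
    refine (hb γ).trans ?_
    rw [mul_assoc]
    apply mul_le_mul_of_nonneg_left _ hB.le
    rw [pow_succ' _ 4]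
    apply mul_le_mul_of_nonneg_right _ (by positivity)
    exact inv_anti₀ hX0 (by linarith)
  have h2 : ∫ γ in (Metric.closedBall (0 : Fin 3 → ℝ) X)ᶜ, (B * X⁻¹) * ((1 + ‖γ‖)⁻¹) ^ 4 ≤
      ∫ γ : Fin 3 → ℝ, (B * X⁻¹) * ((1 + ‖γ‖)⁻¹) ^ 4 :=
    setIntegral_le_integral (integrable_bracket.const_mul _)
      (Filter.Eventually.of_forall fun γ => by positivity)
  have e2 := integral_const_mul (μ := (volume : Measure (Fin 3 → ℝ))) (B * X⁻¹)
    (fun γ : Fin 3 → ℝ => ((1 + ‖γ‖)⁻¹) ^ 4)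
  rw [e2] at h2
  have : 0 < X⁻¹ := by positivity
  calc _ ≤ _ := h1.trans h2
    _ ≤ _ := by nlinarith

lemma JBW_scale {s : ℕ} (hs : 32 ≤ s) (A : Matrix (Fin 3) (Fin s) ℤ) (δ P X : ℝ) (hP : 0 < P)
    (hX : 0 ≤ X) :
    JBW A δ P X = (P : ℂ) ^ (s - 12) * ∫ γ in Metric.closedBall 0 X, fW A δ γ := by
  unfold JBW
  have hP4 : (P ^ 4) ≠ 0 := by positivity
  rw [Icc_eq_ball _ (by positivity)]
  have h1 : ∀ γ : Fin 3 → ℝ, ∏ j, vBW δ P (LamR A γ j) = (P : ℂ) ^ s * fW A δ (P ^ 4 • γ) := by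
    intro γ
    unfold fW
    have : ∀ j, vBW δ P (LamR A γ j) = P * vBW δ 1 (LamR A (P ^ 4 • γ) j) := by
      intro j
      rw [vBW_scale δ P _ hP]
      congr 2
      simp only [LamR, Finset.mul_sum, Pi.smul_apply, smul_eq_mul]
      exact Finset.sum_congr rfl fun i _ => by ring
    simp_rw [this]
    rw [Finset.prod_mul_distrib]; simp
  simp_rw [h1]
  rw [integral_const_mul, Measure.setIntegral_comp_smul _ _ _ hP4, smul_closedBall _ _ (by positivity)]
  have e : ‖P ^ 4‖ * (X / P ^ 4) = X := by
    rw [Real.norm_of_nonneg (by positivity)]; field_simp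
  rw [e, smul_zero, Complex.real_smul, ← mul_assoc]
  congr 1
  have : (P : ℂ) ≠ 0 := by exact_mod_cast hP.ne'
  rw [abs_of_pos (by positivity)]
  simp only [Module.finrank_fintype_fun_eq_card, Fintype.card_fin]
  push_cast
  rw [← pow_mul, pow_sub₀ _ this (by omega)]

/-- the image point `A u`. -/
noncomputable def yW {s : ℕ} (A : Matrix (Fin 3) (Fin s) ℤ) (u : Fin s → ℝ) (i : Fin 3) : ℝ :=
  ∑ j, (A i j : ℝ) * u j

/-- the linear map replacing the first three coordinates by `A u`. -/
noncomputable def TW {s : ℕ} (A : Matrix (Fin 3) (Fin s) ℤ) : (Fin s → ℝ) →ₗ[ℝ] (Fin s → ℝ) where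
  toFun u j := if h : j.val < 3 then yW A u ⟨j.val, h⟩ else u j
  map_add' u v := by
    ext j
    by_cases h : j.val < 3
    · simp [h, yW, mul_add, Finset.sum_add_distrib]
    · simp [h]
  map_smul' c u := by
    ext j
    by_cases h : j.val < 3
    · simp only [h, yW, Pi.smul_apply, smul_eq_mul, dif_pos, RingHom.id_apply, Finset.mul_sum]
      exact Finset.sum_congr rfl fun i _ => by ring
    · simp [h]

lemma TW_apply {s : ℕ} (A : Matrix (Fin 3) (Fin s) ℤ) (u : Fin s → ℝ) (j : Fin s) :
    TW A u j = if h : j.val < 3 then yW A u ⟨j.val, h⟩ else u j := rfl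

lemma TW_ker {s : ℕ} (hs : 32 ≤ s) (A : Matrix (Fin 3) (Fin s) ℤ) (hA : Propitious A) :
    LinearMap.ker (TW A) = ⊥ := by
  rw [LinearMap.ker_eq_bot']
  intro u hu
  have hd := block_det hs A hA 0
  set M : Matrix (Fin 3) (Fin 3) ℝ := Matrix.of fun (k i : Fin 3) =>
      (A i ⟨4 * (0 : Fin 8).val + k.val, by have h2 := k.isLt; simp; omega⟩ : ℝ) with hM
  have hbig : ∀ j : Fin s, ¬ j.val < 3 → u j = 0 := by
    intro j hj
    have := congrFun hu j
    rw [TW_apply, dif_neg hj] at this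
    exact this
  set e : Fin 3 → Fin s := Fin.castLE (by omega) with he
  have hy : ∀ i : Fin 3, yW A u i = 0 := by
    intro i
    have := congrFun hu (e i)
    rw [TW_apply, dif_pos (show (e i).val < 3 from i.isLt)] at this
    exact this
  have hv : Matrix.vecMul (fun k => u (e k)) M = 0 := by
    ext i
    have h1 := hy i
    unfold yW at h1
    rw [Pi.zero_apply, ← h1]
    unfold Matrix.vecMul dotProduct
    apply Fintype.sum_of_injective e (Fin.castLE_injective _)
    · intro j hj
      rw [hbig j, mul_zero]
      intro hlt
      exact hj ⟨⟨j.val, hlt⟩, by ext; rfl⟩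
    · intro k
      simp only [hM, Matrix.of_apply]
      rw [mul_comm]
      congr 3
      ext; simp [he]
  have h0 := Matrix.eq_zero_of_vecMul_eq_zero hd hv
  ext j
  by_cases hj : j.val < 3
  · have := congrFun h0 ⟨j.val, hj⟩
    exact this
  · exact hbig j hj

/-- the set whose volume is bounded below. -/
def SW {s : ℕ} (A : Matrix (Fin 3) (Fin s) ℤ) (δ ε : ℝ) : Set (Fin s → ℝ) :=
  {u | (∀ j, u j ∈ Set.Icc (δ ^ 4) 1) ∧ ∀ i, |yW A u i| ≤ ε}

lemma continuous_yW {s : ℕ} (A : Matrix (Fin 3) (Fin s) ℤ) (i : Fin 3) :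
    Continuous fun u => yW A u i := by
  unfold yW; fun_prop

lemma SW_closed {s : ℕ} (A : Matrix (Fin 3) (Fin s) ℤ) (δ ε : ℝ) : IsClosed (SW A δ ε) := by
  unfold SW
  have h1 : IsClosed {u : Fin s → ℝ | ∀ j, u j ∈ Set.Icc (δ ^ 4) 1} := by
    rw [Set.setOf_forall]
    exact isClosed_iInter fun j => isClosed_Icc.preimage (continuous_apply j)
  have h2 : IsClosed {u : Fin s → ℝ | ∀ i, |yW A u i| ≤ ε} := by
    rw [Set.setOf_forall]
    exact isClosed_iInter fun i => isClosed_le (continuous_yW A i).abs continuous_const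
  exact h1.inter h2

lemma SW_finite {s : ℕ} (A : Matrix (Fin 3) (Fin s) ℤ) (δ ε : ℝ) :
    volume (SW A δ ε) < ⊤ := by
  have : SW A δ ε ⊆ Set.Icc (fun _ => δ ^ 4) (fun _ => 1) :=
    fun u hu => ⟨fun j => (hu.1 j).1, fun j => (hu.1 j).2⟩
  exact (measure_mono this).trans_lt isCompact_Icc.measure_lt_top

lemma SW_volume {s : ℕ} (hs : 32 ≤ s) (A : Matrix (Fin 3) (Fin s) ℤ) (hA : Propitious A)
    (δ : ℝ) (hδ : δ ∈ Set.Ioo (0 : ℝ) 1)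
    (hθ : ∃ θ : Fin s → ℝ, NonsingularSol A θ ∧ ∀ j, θ j ∈ Set.Ioo δ 1) :
    ∃ c > (0 : ℝ), ∃ ε₀ > (0 : ℝ), ∀ ε : ℝ, 0 < ε → ε ≤ ε₀ →
      c * ε ^ 3 ≤ (volume (SW A δ ε)).toReal := by
  obtain ⟨θ, ⟨hsol, _⟩, hθ⟩ := hθ
  set u₀ : Fin s → ℝ := fun j => θ j ^ 4 with hu₀
  have hker := TW_ker hs A hA
  obtain ⟨K, hK, hanti⟩ := LinearMap.exists_antilipschitzWith _ hker
  have hu₀mem : u₀ ∈ Set.pi Set.univ (fun _ : Fin s => Set.Ioo (δ ^ 4) 1) := by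
    intro j _
    exact ⟨pow_lt_pow_left₀ (hθ j).1 hδ.1.le (by norm_num),
      pow_lt_one₀ (hδ.1.le.trans (hθ j).1.le) (hθ j).2 (by norm_num)⟩
  have hopen : IsOpen (Set.pi Set.univ (fun _ : Fin s => Set.Ioo (δ ^ 4) 1)) :=
    isOpen_set_pi Set.finite_univ fun _ _ => isOpen_Ioo
  obtain ⟨d, hd, hball⟩ := Metric.nhds_basis_closedBall.mem_iff.1 (hopen.mem_nhds hu₀mem)
  have hKpos : (0 : ℝ) < K := hK
  set η : ℝ := d / K with hη
  have hη0 : 0 < η := by positivity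
  have hdet : LinearMap.det (TW A) ≠ 0 := by
    intro h
    exact (LinearMap.bot_lt_ker_of_det_eq_zero h).ne' hker
  have hy0 : ∀ i, yW A u₀ i = 0 := fun i => hsol i
  set q : ℝ := ∏ j : Fin s, (if j.val < 3 then (2 : ℝ) else 2 * η) with hq
  have hq0 : 0 < q := Finset.prod_pos fun j _ => by split_ifs <;> positivity
  refine ⟨|(LinearMap.det (TW A))⁻¹| * q, by positivity, η, hη0, fun ε hε hεη => ?_⟩
  set r : Fin s → ℝ := fun j => if j.val < 3 then ε else η with hr
  have hr0 : ∀ j, 0 ≤ r j := fun j => by simp only [hr]; split_ifs <;> positivity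
  have hrη : ∀ j, r j ≤ η := fun j => by simp only [hr]; split_ifs <;> [exact hεη; exact le_rfl]
  set Q : Set (Fin s → ℝ) := Set.Icc (fun j => TW A u₀ j - r j) (fun j => TW A u₀ j + r j) with hQ
  have hsub : (TW A) ⁻¹' Q ⊆ SW A δ ε := by
    intro u hu
    have hu' : ∀ j, |TW A u j - TW A u₀ j| ≤ r j := by
      intro j
      rw [abs_le]
      have h1 := hu.1 j
      have h2 := hu.2 j
      simp only at h1 h2
      constructor <;> linarith
    have hdist : dist u u₀ ≤ d := by
      have h1 := hanti.le_mul_dist u u₀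
      have h2 : dist (TW A u) (TW A u₀) ≤ η := by
        rw [dist_pi_le_iff hη0.le]
        intro j
        rw [Real.dist_eq]
        exact (hu' j).trans (hrη j)
      calc dist u u₀ ≤ K * dist (TW A u) (TW A u₀) := h1
        _ ≤ K * η := by gcongr
        _ = d := by rw [hη]; field_simp
    have hmem := hball (Metric.mem_closedBall.2 hdist)
    refine ⟨fun j => ⟨(hmem j trivial).1.le, (hmem j trivial).2.le⟩, fun i => ?_⟩
    have h3 := hu' (Fin.castLE (by omega) i)
    have hi : (Fin.castLE (by omega : 3 ≤ s) i).val < 3 := i.isLt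
    rw [TW_apply, TW_apply, dif_pos hi, dif_pos hi] at h3
    simp only [hr, if_pos hi] at h3
    have h4 : (⟨(Fin.castLE (by omega : 3 ≤ s) i).val, hi⟩ : Fin 3) = i := by ext; rfl
    rw [h4, hy0, sub_zero] at h3
    exact h3
  have hvol : volume ((TW A) ⁻¹' Q) =
      ENNReal.ofReal (|(LinearMap.det (TW A))⁻¹| * q * ε ^ 3) := by
    rw [Measure.addHaar_preimage_linearMap _ hdet, hQ, Real.volume_Icc_pi, mul_assoc,
      ENNReal.ofReal_mul (abs_nonneg _), ← ENNReal.ofReal_prod_of_nonneg]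
    · congr 2
      have e1 : ∀ j : Fin s, TW A u₀ j + r j - (TW A u₀ j - r j) =
          (if j.val < 3 then (2 : ℝ) else 2 * η) * (if j.val < 3 then ε else 1) := by
        intro j
        simp only [hr]
        split_ifs <;> ring
      simp_rw [e1]
      rw [Finset.prod_mul_distrib]
      congr 1
      have := Fintype.prod_of_injective (Fin.castLE (by omega : 3 ≤ s)) (Fin.castLE_injective _)
        (fun _ : Fin 3 => ε) (fun j : Fin s => if j.val < 3 then ε else 1)
        (fun j hj => by
          rw [if_neg]
          intro hlt
          exact hj ⟨⟨j.val, hlt⟩, by ext; rfl⟩)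
        (fun i => by simp)
      rw [← this]; simp
    · intro j _
      linarith [hr0 j]
  have := ENNReal.toReal_mono (SW_finite A δ ε).ne (measure_mono hsub (μ := volume))
  rw [hvol, ENNReal.toReal_ofReal (by positivity)] at this
  exact this

lemma gauss_int (ε : ℝ) (hε : 0 < ε) (y : Fin 3 → ℝ) :
    ∫ γ : Fin 3 → ℝ, Complex.exp (-(ε ^ 2 : ℝ) * ∑ i, (γ i : ℂ) ^ 2) * eC (∑ i, γ i * y i) =
      (((Real.pi / ε ^ 2) ^ (3 / 2 : ℝ) * Real.exp (-(Real.pi ^ 2 * ∑ i, y i ^ 2) / ε ^ 2) : ℝ) : ℂ) := by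
  have h := GaussianFourier.integral_cexp_neg_mul_sum_add (b := ((ε ^ 2 : ℝ) : ℂ))
    (by rw [Complex.ofReal_re]; positivity) (fun i : Fin 3 => 2 * Real.pi * Complex.I * y i)
  have e1 : ∀ γ : Fin 3 → ℝ,
      Complex.exp (-(ε ^ 2 : ℝ) * ∑ i, (γ i : ℂ) ^ 2) * eC (∑ i, γ i * y i) =
      Complex.exp (-((ε ^ 2 : ℝ) : ℂ) * ∑ i, (γ i : ℂ) ^ 2 +
        ∑ i, (2 * Real.pi * Complex.I * y i) * γ i) := by
    intro γ
    rw [Complex.exp_add]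
    unfold eC
    congr 2
    push_cast
    rw [Finset.mul_sum]
    exact Finset.sum_congr rfl fun i _ => by ring
  simp_rw [e1]
  rw [h, Complex.ofReal_mul, Complex.ofReal_cpow (by positivity), Complex.ofReal_exp]
  congr 1
  · push_cast; simp
  · congr 1
    push_cast
    have hε' : (ε : ℂ) ≠ 0 := by exact_mod_cast hε.ne'
    have : ∑ i, (2 * Real.pi * Complex.I * (y i : ℂ)) ^ 2 =
        -(4 * (Real.pi ^ 2 * ∑ i, (y i : ℂ) ^ 2)) := by
      rw [Finset.mul_sum, Finset.mul_sum, ← Finset.sum_neg_distrib]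
      apply Finset.sum_congr rfl
      intro i _
      rw [mul_pow, mul_pow, Complex.I_sq]; ring
    rw [this]
    field_simp

/-- truncated density. -/
noncomputable def RW (δ u : ℝ) : ℝ := (Set.Ioc (δ ^ 4) 1).indicator rhoW u

lemma RW_nonneg (δ u : ℝ) : 0 ≤ RW δ u := by
  unfold RW
  apply Set.indicator_nonneg
  intro x hx
  exact rhoW_nonneg ((by positivity : (0 : ℝ) ≤ δ ^ 4).trans hx.1.le)

lemma RW_integrable (δ : ℝ) (hδ : δ ∈ Set.Ioo (0 : ℝ) 1) : Integrable (RW δ) := by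
  unfold RW
  have h0 := hδ.1
  rw [integrable_indicator_iff measurableSet_Ioc]
  exact ((rhoW_contOn (by positivity)).integrableOn_Icc).mono_set Set.Ioc_subset_Icc_self

lemma vBW_eq_RW (δ β : ℝ) (hδ : δ ∈ Set.Ioo (0 : ℝ) 1) :
    vBW δ 1 β = ∫ u, (RW δ u : ℂ) * eC (β * u) := by
  rw [vBW_eq δ β hδ, intervalIntegral.integral_of_le (pow_le_one₀ hδ.1.le hδ.2.le),
    ← integral_indicator measurableSet_Ioc]
  congr 1; ext u
  unfold RW
  by_cases h : u ∈ Set.Ioc (δ ^ 4) 1 <;> simp [h]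

/-- product density -/
noncomputable def WW {s : ℕ} (δ : ℝ) (u : Fin s → ℝ) : ℝ := ∏ j, RW δ (u j)

lemma WW_nonneg {s : ℕ} (δ : ℝ) (u : Fin s → ℝ) : 0 ≤ WW δ u :=
  Finset.prod_nonneg fun _ _ => RW_nonneg _ _

lemma WW_integrable {s : ℕ} (δ : ℝ) (hδ : δ ∈ Set.Ioo (0 : ℝ) 1) :
    Integrable (WW δ : (Fin s → ℝ) → ℝ) := by
  unfold WW
  exact Integrable.fintype_prod (fun _ => RW_integrable δ hδ)

lemma fW_eq {s : ℕ} (A : Matrix (Fin 3) (Fin s) ℤ) (δ : ℝ) (hδ : δ ∈ Set.Ioo (0 : ℝ) 1)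
    (γ : Fin 3 → ℝ) :
    fW A δ γ = ∫ u : Fin s → ℝ, (WW δ u : ℂ) * eC (∑ i, γ i * yW A u i) := by
  unfold fW
  simp_rw [vBW_eq_RW δ _ hδ]
  rw [← integral_fintype_prod_volume_eq_prod]
  congr 1; ext u
  rw [Finset.prod_mul_distrib, ← eC_sum]
  congr 1
  · unfold WW; push_cast; rfl
  · congr 1
    unfold LamR yW
    simp_rw [Finset.sum_mul, Finset.mul_sum]
    rw [Finset.sum_comm]
    exact Finset.sum_congr rfl fun i _ => Finset.sum_congr rfl fun j _ => by ring

/-- the Gaussian-smoothed integral. -/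
lemma smoothed {s : ℕ} (A : Matrix (Fin 3) (Fin s) ℤ) (δ : ℝ) (hδ : δ ∈ Set.Ioo (0 : ℝ) 1)
    (ε : ℝ) (hε : 0 < ε) :
    ∫ γ : Fin 3 → ℝ, Complex.exp (-(ε ^ 2 : ℝ) * ∑ i, (γ i : ℂ) ^ 2) * fW A δ γ =
      ((∫ u : Fin s → ℝ, WW δ u * ((Real.pi / ε ^ 2) ^ (3 / 2 : ℝ) *
        Real.exp (-(Real.pi ^ 2 * ∑ i, yW A u i ^ 2) / ε ^ 2)) : ℝ) : ℂ) := by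
  rw [← integral_complex_ofReal]
  have hg : Integrable (fun γ : Fin 3 → ℝ =>
      Complex.exp (-(ε ^ 2 : ℝ) * ∑ i, (γ i : ℂ) ^ 2)) := by
    have := GaussianFourier.integrable_cexp_neg_mul_sum_add (b := ((ε ^ 2 : ℝ) : ℂ))
      (by rw [Complex.ofReal_re]; positivity) (fun i : Fin 3 => 0)
    simpa using this
  have hW : Integrable (fun u : Fin s → ℝ => (WW δ u : ℂ)) := (WW_integrable δ hδ).ofReal
  have hprod := hg.mul_prod hW
  have hint : Integrable (Function.uncurry fun (γ : Fin 3 → ℝ) (u : Fin s → ℝ) =>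
      Complex.exp (-(ε ^ 2 : ℝ) * ∑ i, (γ i : ℂ) ^ 2) *
        ((WW δ u : ℂ) * eC (∑ i, γ i * yW A u i))) (volume.prod volume) := by
    have hc : Continuous fun p : (Fin 3 → ℝ) × (Fin s → ℝ) => eC (∑ i, p.1 i * yW A p.2 i) := by
      apply continuous_eC.comp
      apply continuous_finsetSum
      intro i _
      exact ((continuous_apply i).comp continuous_fst).mul ((continuous_yW A i).comp continuous_snd)
    have := hprod.mul_bdd (c := 1) hc.aestronglyMeasurable
      (Filter.Eventually.of_forall fun p => (norm_eC _).le)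
    refine this.congr (Filter.Eventually.of_forall fun p => ?_)
    simp only [Function.uncurry]
    ring
  simp_rw [fW_eq A δ hδ, ← integral_const_mul]
  rw [integral_integral_swap hint]
  congr 1; ext u
  have : ∀ γ : Fin 3 → ℝ, Complex.exp (-(ε ^ 2 : ℝ) * ∑ i, (γ i : ℂ) ^ 2) *
        ((WW δ u : ℂ) * eC (∑ i, γ i * yW A u i)) =
      (WW δ u : ℂ) * (Complex.exp (-(ε ^ 2 : ℝ) * ∑ i, (γ i : ℂ) ^ 2) *
        eC (∑ i, γ i * yW A u i)) := fun γ => by ring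
  simp_rw [this]
  rw [integral_const_mul, gauss_int ε hε]
  push_cast; rfl

lemma smoothed_lower {s : ℕ} (hs : 32 ≤ s) (A : Matrix (Fin 3) (Fin s) ℤ) (hA : Propitious A)
    (δ : ℝ) (hδ : δ ∈ Set.Ioo (0 : ℝ) 1)
    (hθ : ∃ θ : Fin s → ℝ, NonsingularSol A θ ∧ ∀ j, θ j ∈ Set.Ioo δ 1) :
    ∃ c > (0 : ℝ), ∃ ε₀ > (0 : ℝ), ∀ ε : ℝ, 0 < ε → ε ≤ ε₀ →
      c ≤ ∫ u : Fin s → ℝ, WW δ u * ((Real.pi / ε ^ 2) ^ (3 / 2 : ℝ) *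
        Real.exp (-(Real.pi ^ 2 * ∑ i, yW A u i ^ 2) / ε ^ 2)) := by
  obtain ⟨c, hc, ε₀, hε₀, h⟩ := SW_volume hs A hA δ hδ hθ
  refine ⟨(1 / 4) ^ s * Real.exp (-(Real.pi ^ 2 * 3)) * c, by positivity, ε₀, hε₀,
    fun ε hε hle => ?_⟩
  have hv := h ε hε hle
  set G : (Fin s → ℝ) → ℝ := fun u => WW δ u * ((Real.pi / ε ^ 2) ^ (3 / 2 : ℝ) *
        Real.exp (-(Real.pi ^ 2 * ∑ i, yW A u i ^ 2) / ε ^ 2)) with hG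
  have hGnn : ∀ u, 0 ≤ G u := fun u => by
    have := WW_nonneg δ u
    simp only [hG]; positivity
  have hGint : Integrable G := by
    have hcont : Continuous fun u : Fin s → ℝ => (Real.pi / ε ^ 2) ^ (3 / 2 : ℝ) *
        Real.exp (-(Real.pi ^ 2 * ∑ i, yW A u i ^ 2) / ε ^ 2) := by
      have := continuous_yW A
      fun_prop
    refine (WW_integrable δ hδ).mul_bdd (c := (Real.pi / ε ^ 2) ^ (3 / 2 : ℝ))
      hcont.aestronglyMeasurable (Filter.Eventually.of_forall fun u => ?_)
    rw [Real.norm_of_nonneg (by positivity)]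
    apply mul_le_of_le_one_right (by positivity)
    rw [Real.exp_le_one_iff, neg_div]
    have : 0 ≤ (Real.pi ^ 2 * ∑ i, yW A u i ^ 2) / ε ^ 2 :=
      div_nonneg (mul_nonneg (by positivity) (Finset.sum_nonneg fun _ _ => sq_nonneg _))
        (by positivity)
    linarith
  set κ : ℝ := (1 / 4) ^ s * ((ε ^ 3)⁻¹ * Real.exp (-(Real.pi ^ 2 * 3))) with hκ
  -- replace the closed box by the half-open one
  have hae : ∀ᵐ u : Fin s → ℝ, ∀ j, u j ≠ δ ^ 4 := by
    rw [ae_all_iff]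
    intro j
    have h1 : ∀ᵐ x : ℝ, x ≠ δ ^ 4 := by
      simp [ae_iff]
    exact (Measure.quasiMeasurePreserving_eval (μ := fun _ : Fin s => (volume : Measure ℝ)) j).ae h1
  have hlow : ∀ᵐ u : Fin s → ℝ, u ∈ SW A δ ε → κ ≤ G u := by
    filter_upwards [hae] with u hne hu
    simp only [hG, hκ]
    have hδ0 := hδ.1
    have h1 : (1 / 4 : ℝ) ^ s ≤ WW δ u := by
      have : (1 / 4 : ℝ) ^ s = ∏ _j : Fin s, (1 / 4 : ℝ) := by simp
      rw [this]
      unfold WW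
      apply Finset.prod_le_prod (fun _ _ => by norm_num)
      intro j _
      have hj := hu.1 j
      have hj' : u j ∈ Set.Ioc (δ ^ 4) 1 := ⟨lt_of_le_of_ne hj.1 (hne j).symm, hj.2⟩
      unfold RW
      rw [Set.indicator_of_mem hj']
      exact rhoW_lower (lt_trans (by positivity) hj'.1) hj'.2
    have h2 : (ε ^ 3)⁻¹ ≤ (Real.pi / ε ^ 2) ^ (3 / 2 : ℝ) := by
      have e : (ε ^ 3)⁻¹ = ((ε ^ 2)⁻¹) ^ (3 / 2 : ℝ) := by
        rw [Real.inv_rpow (by positivity), ← Real.rpow_natCast ε 2, ← Real.rpow_mul hε.le]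
        norm_num
      rw [e]
      apply Real.rpow_le_rpow (by positivity) _ (by norm_num)
      rw [div_eq_mul_inv]
      apply le_mul_of_one_le_left (by positivity)
      linarith [Real.pi_gt_three]
    have h3 : Real.exp (-(Real.pi ^ 2 * 3)) ≤
        Real.exp (-(Real.pi ^ 2 * ∑ i, yW A u i ^ 2) / ε ^ 2) := by
      apply Real.exp_le_exp.2
      rw [neg_div, neg_le_neg_iff, div_le_iff₀ (by positivity), mul_assoc]
      apply mul_le_mul_of_nonneg_left _ (by positivity)
      calc ∑ i, yW A u i ^ 2 ≤ ∑ _i : Fin 3, ε ^ 2 :=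
            Finset.sum_le_sum fun i _ => by
              rw [← sq_abs]; exact pow_le_pow_left₀ (abs_nonneg _) (hu.2 i) 2
        _ = 3 * ε ^ 2 := by simp
    have := WW_nonneg δ u
    gcongr
  have hm : MeasurableSet (SW A δ ε) := (SW_closed A δ ε).measurableSet
  calc (1 / 4) ^ s * Real.exp (-(Real.pi ^ 2 * 3)) * c = κ * (c * ε ^ 3) := by
        rw [hκ]; field_simp
    _ ≤ κ * (volume (SW A δ ε)).toReal := by
        apply mul_le_mul_of_nonneg_left hv
        rw [hκ]; positivity
    _ = ∫ u in SW A δ ε, κ := by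
        rw [setIntegral_const, smul_eq_mul, mul_comm]; rfl
    _ ≤ ∫ u in SW A δ ε, G u := by
        apply setIntegral_mono_on_ae _ hGint.integrableOn hm hlow
        exact integrableOn_const (SW_finite A δ ε).ne
    _ ≤ ∫ u, G u := setIntegral_le_integral hGint (Filter.Eventually.of_forall hGnn)

lemma main_lower {s : ℕ} (hs : 32 ≤ s) (A : Matrix (Fin 3) (Fin s) ℤ) (hA : Propitious A)
    (δ : ℝ) (hδ : δ ∈ Set.Ioo (0 : ℝ) 1)
    (hθ : ∃ θ : Fin s → ℝ, NonsingularSol A θ ∧ ∀ j, θ j ∈ Set.Ioo δ 1) :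
    ∃ c > (0 : ℝ), c ≤ (∫ γ, fW A δ γ).re := by
  obtain ⟨c, hc, ε₀, hε₀, h⟩ := smoothed_lower hs A hA δ hδ hθ
  refine ⟨c, hc, ?_⟩
  have hI := integrable_fW hs A hA δ hδ
  have hlim : Tendsto (fun ε : ℝ => ∫ γ : Fin 3 → ℝ,
      Complex.exp (-(ε ^ 2 : ℝ) * ∑ i, (γ i : ℂ) ^ 2) * fW A δ γ) (nhdsWithin 0 (Set.Ioi 0))
      (nhds (∫ γ, fW A δ γ)) := by
    apply tendsto_integral_filter_of_dominated_convergence (fun γ => ‖fW A δ γ‖)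
    · refine Filter.Eventually.of_forall fun ε => Continuous.aestronglyMeasurable ?_
      have := continuous_fW A δ
      fun_prop
    · refine Filter.Eventually.of_forall fun ε => Filter.Eventually.of_forall fun γ => ?_
      rw [norm_mul]
      apply mul_le_of_le_one_left (norm_nonneg _)
      have e : (-(ε ^ 2 : ℝ) * ∑ i, (γ i : ℂ) ^ 2 : ℂ) = ((-(ε ^ 2) * ∑ i, γ i ^ 2 : ℝ) : ℂ) := by
        push_cast; rfl
      rw [e, Complex.norm_exp, Complex.ofReal_re, Real.exp_le_one_iff]
      have := Finset.sum_nonneg (s := Finset.univ) (f := fun i => γ i ^ 2) (fun i _ => sq_nonneg _)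
      nlinarith [sq_nonneg ε]
    · exact hI.norm
    · refine Filter.Eventually.of_forall fun γ => ?_
      have hc : Continuous fun ε : ℝ =>
        Complex.exp (-(ε ^ 2 : ℝ) * ∑ i, (γ i : ℂ) ^ 2) * fW A δ γ := by fun_prop
      have := (hc.tendsto 0).mono_left (nhdsWithin_le_nhds (s := Set.Ioi (0 : ℝ)))
      simpa using this
  have hre := (Complex.continuous_re.tendsto _).comp hlim
  apply ge_of_tendsto hre
  filter_upwards [Ioc_mem_nhdsGT hε₀] with ε hε
  simp only [Function.comp]
  rw [smoothed A δ hδ ε hε.1, Complex.ofReal_re]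
  exact h ε hε.1 hε.2

theorem stmt15 {s : ℕ} (hs : 32 ≤ s) (A : Matrix (Fin 3) (Fin s) ℤ)
    (hA : Propitious A) (δ : ℝ) (hδ : δ ∈ Set.Ioo (0 : ℝ) 1)
    (hθ : ∃ θ : Fin s → ℝ, NonsingularSol A θ ∧ ∀ j, θ j ∈ Set.Ioo δ 1) :
    ∃ C > (0 : ℝ), ∃ c > (0 : ℝ), ∃ P₀ : ℝ, ∀ P : ℝ, P₀ ≤ P →
      ∃ J : ℂ,
        Tendsto (fun X : ℝ => JBW A δ P X) atTop (nhds J) ∧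
        (∀ X : ℝ, 1 ≤ X → ‖J - JBW A δ P X‖ ≤ C * P ^ (s - 12) * X⁻¹) ∧
        c * P ^ (s - 12) ≤ J.re := by
  obtain ⟨C, hC, htail⟩ := tail_bound hs A hA δ hδ
  obtain ⟨c, hc, hlow⟩ := main_lower hs A hA δ hδ hθ
  refine ⟨C, hC, c, hc, 1, fun P hP => ?_⟩
  have hP0 : 0 < P := by linarith
  have hbd : ∀ X : ℝ, 1 ≤ X → ‖(P : ℂ) ^ (s - 12) * (∫ γ, fW A δ γ) - JBW A δ P X‖ ≤
      C * P ^ (s - 12) * X⁻¹ := by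
    intro X hX
    rw [JBW_scale hs A δ P X hP0 (by linarith), ← mul_sub, norm_mul, norm_pow, Complex.norm_real,
      Real.norm_of_nonneg hP0.le]
    calc _ ≤ P ^ (s - 12) * (C * X⁻¹) :=
          mul_le_mul_of_nonneg_left (htail X hX) (by positivity)
      _ = _ := by ring
  refine ⟨(P : ℂ) ^ (s - 12) * ∫ γ, fW A δ γ, ?_, hbd, ?_⟩
  · rw [tendsto_iff_norm_sub_tendsto_zero]
    have h0 : Tendsto (fun X : ℝ => C * P ^ (s - 12) * X⁻¹) atTop (nhds 0) := by
      simpa using tendsto_inv_atTop_zero.const_mul (C * P ^ (s - 12))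
    refine squeeze_zero' (Filter.Eventually.of_forall fun _ => norm_nonneg _) ?_ h0
    filter_upwards [eventually_ge_atTop 1] with X hX
    rw [norm_sub_rev]
    exact hbd X hX
  · rw [← Complex.ofReal_pow, Complex.re_ofReal_mul, mul_comm]
    exact mul_le_mul_of_nonneg_left hlow (by positivity)
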